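/- Let 𝓕 be a nonprincipal ultrafilter on ℕ, let (V n) be a family of nonempty finite sets with |V n| → ∞ along 𝓕, and for some n ≥ 2 let E m ⊆ (V m)^n be symmetric relations (invariant under permutations of coordinates). Assume the partitioned relation E(x₁; x₂,…,xₙ) is stable on the ultraproduct: for some k ∈ ℕ there do not exist germs a¹,…,a^k in ∏ V m / 𝓕 and (n−1)-tuples of germs b̄¹,…,b̄^k such that (aⁱ, b̄ʲ) satisfies E if and only if i ≤ j. Then there exist nonempty finite subsets A m ⊆ V m with δ(A) > 0 such that either every n-tuple of pairwise distinct germs from ∏ A m / 𝓕 satisfies E, or no n-tuple of pairwise distinct germs from ∏ A m / 𝓕 satisfies E. -/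

import Mathlib

open Filter

/-- The family `A` of nonempty finite subsets `A n ⊆ V n` has dimension `l` along the
ultrafilter `𝓕`: the sequence `log |A n| / log |V n|` converges to `l` along `𝓕`. -/
def hasDim (𝓕 : Ultrafilter ℕ) {V : ℕ → Type} [∀ n, Fintype (V n)]
    (A : ∀ n, Set (V n)) (l : ℝ) : Prop :=
  Tendsto (fun n => Real.log ((A n).ncard) / Real.log (Fintype.card (V n)))
    (𝓕 : Filter ℕ) (nhds l)

/-- Given `a : V` and an `(n-1)`-tuple `b`, form the `n`-tuple `(a, b₁, …, b_{n-1})`. -/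
def extendTuple {V : Type*} {n : ℕ} (a : V) (b : Fin (n - 1) → V) : Fin n → V :=
  fun t => if h : (t : ℕ) = 0 then a else b ⟨(t : ℕ) - 1, by have := t.isLt; omega⟩

namespace EH

/-- Tree rank. -/
def Rk {α β : Type*} (R : α → β → Prop) : ℕ → Set α → Set β → Prop
  | 0, A, _ => A.Nonempty
  | n+1, A, B => ∃ b ∈ B, Rk R n {a | a ∈ A ∧ R a b} B ∧ Rk R n {a | a ∈ A ∧ ¬ R a b} B

theorem Rk.mono {α β : Type*} {R : α → β → Prop} {n : ℕ} : ∀ {A A' : Set α} {B B' : Set β},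
    A ⊆ A' → B ⊆ B' → Rk R n A B → Rk R n A' B' := by
  induction n with
  | zero => intro A A' B B' hA hB h; exact Set.Nonempty.mono hA h
  | succ n ih =>
    rintro A A' B B' hA hB ⟨b, hb, h1, h2⟩
    exact ⟨b, hB hb, ih (fun a ha => ⟨hA ha.1, ha.2⟩) hB h1,
      ih (fun a ha => ⟨hA ha.1, ha.2⟩) hB h2⟩

theorem Rk.nonempty {α β : Type*} {R : α → β → Prop} {n : ℕ} : ∀ {A : Set α} {B : Set β},
    Rk R n A B → A.Nonempty := by
  induction n with
  | zero => intro A B h; exact h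
  | succ n ih =>
    rintro A B ⟨b, hb, h1, h2⟩
    exact (ih h1).mono (fun a ha => ha.1)

theorem Rk.split {α β : Type*} {R : α → β → Prop} (n : ℕ) : ∀ {p q : ℕ} {A : Set α} {B B1 B2 : Set β},
    p + q = n → B ⊆ B1 ∪ B2 → Rk R n A B → Rk R p A B1 ∨ Rk R q A B2 := by
  induction n with
  | zero =>
    intro p q A B B1 B2 hpq hB h
    obtain ⟨rfl, rfl⟩ : p = 0 ∧ q = 0 := by omega
    exact Or.inl h
  | succ n ih =>
    intro p q A B B1 B2 hpq hB h
    have hne := h.nonempty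
    obtain ⟨b, hb, h1, h2⟩ := h
    rcases p with _ | p
    · exact Or.inl hne
    rcases q with _ | q
    · exact Or.inr hne
    rcases hB hb with hb1 | hb2
    · rcases ih (p := p) (q := q+1) (by omega) hB h1 with k1 | k1
      · rcases ih (p := p) (q := q+1) (by omega) hB h2 with k2 | k2
        · exact Or.inl ⟨b, hb1, k1, k2⟩
        · exact Or.inr (k2.mono (fun a ha => ha.1) subset_rfl)
      · exact Or.inr (k1.mono (fun a ha => ha.1) subset_rfl)
    · rcases ih (p := p+1) (q := q) (by omega) hB h1 with k1 | k1
      · exact Or.inl (k1.mono (fun a ha => ha.1) subset_rfl)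
      · rcases ih (p := p+1) (q := q) (by omega) hB h2 with k2 | k2
        · exact Or.inl (k2.mono (fun a ha => ha.1) subset_rfl)
        · exact Or.inr ⟨b, hb2, k1, k2⟩

/-- The height needed. -/
def ht : ℕ → ℕ
  | 0 => 0
  | r+1 => (ht r + 1) + (ht r + 1)

theorem ladder {α β : Type*} {R : α → β → Prop} [Nonempty β] (r : ℕ) : ∀ {A : Set α} {B : Set β},
    Rk R (ht r) A B → ∃ (a : ℕ → α) (b : ℕ → β), (∀ i ≤ r, a i ∈ A) ∧ (∀ j < r, b j ∈ B) ∧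
      ∀ i ≤ r, ∀ j < r, (R (a i) (b j) ↔ i ≤ j) := by
  induction r with
  | zero =>
    rintro A B ⟨a, ha⟩
    exact ⟨fun _ => a, fun _ => Classical.arbitrary β, fun _ _ => ha, by simp, by simp⟩
  | succ r ih =>
    intro A B h
    obtain ⟨x, hx⟩ := h.nonempty
    have hB : B ⊆ {b | b ∈ B ∧ R x b} ∪ {b | b ∈ B ∧ ¬ R x b} := by
      intro b hb
      by_cases hxb : R x b
      · exact Or.inl ⟨hb, hxb⟩
      · exact Or.inr ⟨hb, hxb⟩
    rcases Rk.split _ rfl hB h with ⟨y, hy, -, h2⟩ | ⟨y, hy, h1, -⟩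
    · obtain ⟨a, b, ha, hb, hab⟩ := ih h2
      refine ⟨fun i => Nat.casesOn i x a, fun i => Nat.casesOn i y b, ?_, ?_, ?_⟩
      · rintro (_ | i) hi
        · exact hx
        · exact (ha i (by omega)).1
      · rintro (_ | i) hi
        · exact hy.1
        · exact (hb i (by omega)).1
      · rintro (_ | i) hi (_ | j) hj
        · simpa using hy.2
        · simpa using (hb j (by omega)).2
        · simpa using (ha i (by omega)).2
        · simpa using hab i (by omega) j (by omega)
    · obtain ⟨a, b, ha, hb, hab⟩ := ih h1
      refine ⟨fun i => if i = r + 1 then x else a i, fun j => if j = r then y else b j, ?_, ?_, ?_⟩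
      · intro i hi
        dsimp only
        split_ifs with h
        · exact hx
        · exact (ha i (by omega)).1
      · intro i hi
        dsimp only
        split_ifs with h
        · exact hy.1
        · exact (hb i (by omega)).1
      · intro i hi j hj
        dsimp only
        split_ifs with h h' h'
        · simp only [hy.2, false_iff]; omega
        · simp only [(hb j (by omega)).2, false_iff]; omega
        · simp only [(ha i (by omega)).2, true_iff]; omega
        · exact hab i (by omega) j (by omega)

open Classical in
theorem find_good {α β : Type*} {R : α → β → Prop} (t : ℕ → ℕ) (ht0 : 0 < t 0) (B : Set β) (N : ℕ) :
    ∀ A : Finset α, t N ≤ A.card → ¬ Rk R N (A : Set α) B →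
    ∃ i < N, ∃ A0 ⊆ A, t (i+1) ≤ A0.card ∧ ∀ b ∈ B,
      (A0.filter (fun a => R a b)).card < t i ∨ (A0.filter (fun a => ¬ R a b)).card < t i := by
  induction N with
  | zero =>
    intro A hA h
    exact absurd (Finset.coe_nonempty.2 (Finset.card_pos.1 (by omega))) h
  | succ N ih =>
    intro A hA h
    by_cases hg : ∀ b ∈ B,
      (A.filter (fun a => R a b)).card < t N ∨ (A.filter (fun a => ¬ R a b)).card < t N
    · exact ⟨N, by omega, A, subset_rfl, hA, hg⟩
    · push Not at hg
      obtain ⟨b, hb, h1, h2⟩ := hg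
      by_cases k1 : Rk R N ((A.filter (fun a => R a b) : Finset α) : Set α) B
      · by_cases k2 : Rk R N ((A.filter (fun a => ¬ R a b) : Finset α) : Set α) B
        · refine absurd ⟨b, hb, ?_, ?_⟩ h
          · simpa using k1
          · simpa using k2
        · obtain ⟨i, hi, A0, hA0, h⟩ := ih _ h2 k2
          exact ⟨i, by omega, A0, hA0.trans (Finset.filter_subset _ _), h⟩
      · obtain ⟨i, hi, A0, hA0, h⟩ := ih _ h1 k1
        exact ⟨i, by omega, A0, hA0.trans (Finset.filter_subset _ _), h⟩

/-- No ladder of length k. -/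
def NoLadder {α : Type*} (S : Multiset α → Prop) (n k : ℕ) : Prop :=
  ¬ ∃ (a : ℕ → α) (b : ℕ → Multiset α), (∀ j < k, (b j).card = n) ∧
    ∀ i < k, ∀ j < k, (S (a i ::ₘ b j) ↔ i ≤ j)

/-- All nodup multisets of card n in H satisfy P. -/
def Hom {α : Type*} (P : Multiset α → Prop) (n : ℕ) (H : Finset α) : Prop :=
  ∀ u : Finset α, u ⊆ H → u.card = n → P u.val

open Classical in
theorem greedy {α : Type*} (P : Multiset α → Prop) (n s h : ℕ) (H' : Finset α)
    (hbad : ∀ u ⊆ H', u.card = n → (H'.filter (fun x => ¬ P (x ::ₘ u.val))).card ≤ s)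
    (hH' : h + h ^ n * s < H'.card) :
    ∀ j ≤ h, ∃ H ⊆ H', H.card = j ∧ Hom P (n+1) H := by
  intro j
  induction j with
  | zero =>
    intro _
    refine ⟨∅, by simp, by simp, ?_⟩
    intro u hu hc
    have : u = ∅ := Finset.subset_empty.1 hu
    subst this; simp at hc
  | succ j ih =>
    intro hj
    obtain ⟨H, hHH, hc, hH⟩ := ih (by omega)
    let bad := H ∪ (H.powersetCard n).biUnion (fun u => H'.filter (fun x => ¬ P (x ::ₘ u.val)))
    have hbadc : bad.card ≤ h + h ^ n * s := by
      refine (Finset.card_union_le _ _).trans (add_le_add (by omega) ?_)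
      refine (Finset.card_biUnion_le_card_mul _ _ s ?_).trans ?_
      · intro u hu
        rw [Finset.mem_powersetCard] at hu
        exact hbad u (hu.1.trans hHH) hu.2
      · rw [Finset.card_powersetCard]
        gcongr
        refine (Nat.choose_le_pow _ _).trans ?_
        gcongr
        omega
    obtain ⟨x, hx, hxb⟩ : ∃ x ∈ H', x ∉ bad :=
      Finset.exists_mem_notMem_of_card_lt_card (hbadc.trans_lt hH')
    simp only [bad, Finset.mem_union, Finset.mem_biUnion, Finset.mem_powersetCard,
      Finset.mem_filter, not_or, not_exists, not_and, not_not] at hxb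
    refine ⟨insert x H, Finset.insert_subset hx hHH, ?_, ?_⟩
    · rw [Finset.card_insert_of_notMem hxb.1, hc]
    · intro u hu huc
      by_cases hxu : x ∈ u
      · have := hxb.2 (u.erase x) ⟨by rwa [← Finset.subset_insert_iff], by
          rw [Finset.card_erase_of_mem hxu]; omega⟩ hx
        rwa [Finset.erase_val, Multiset.cons_erase hxu] at this
      · exact hH u ((Finset.subset_insert_iff_of_notMem hxu).1 hu) huc

/-- exponents. -/
def ex (D C : ℕ) : ℕ → ℕ
  | 0 => 0
  | i+1 => (D + ex D C i) * (C + 1)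

theorem ex_mono (D C : ℕ) : Monotone (ex D C) := by
  apply monotone_nat_of_le_succ
  intro n
  simp only [ex]
  nlinarith [Nat.zero_le (D * (C+1)), Nat.zero_le (ex D C n * C)]

open Classical in
theorem finite_EH (k n : ℕ) : ∃ C : ℕ, ∀ {α : Type} (S : Multiset α → Prop), NoLadder S n k →
    ∀ h ≥ 2, ∀ A : Finset α, h ^ C ≤ A.card →
      ∃ H ⊆ A, h ≤ H.card ∧ (Hom S (n+1) H ∨ Hom (fun t => ¬ S t) (n+1) H) := by
  induction n with
  | zero =>
    refine ⟨2, ?_⟩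
    intro α S _ h hh A hA
    have h1 := Finset.card_filter_add_card_filter_not (s := A) (fun x => S {x})
    by_cases h2 : h ≤ (A.filter (fun x => S {x})).card
    · refine ⟨_, Finset.filter_subset _ _, h2, Or.inl ?_⟩
      intro u hu hc
      obtain ⟨x, rfl⟩ := Finset.card_eq_one.1 hc
      have := hu (Finset.mem_singleton_self x)
      exact (Finset.mem_filter.1 this).2
    · refine ⟨A.filter (fun x => ¬ S {x}), Finset.filter_subset _ _, by nlinarith, Or.inr ?_⟩
      intro u hu hc
      obtain ⟨x, rfl⟩ := Finset.card_eq_one.1 hc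
      have := hu (Finset.mem_singleton_self x)
      exact (Finset.mem_filter.1 this).2
  | succ n ih =>
    obtain ⟨C, hC⟩ := ih
    obtain ⟨D, hD, hD'⟩ : ∃ D, k * k < 2 ^ D ∧ n + 3 ≤ D :=
      ⟨k * k + (n + 3), lt_of_lt_of_le Nat.lt_two_pow_self
        (Nat.pow_le_pow_right (by norm_num) (by omega)), by omega⟩
    refine ⟨ex D C (ht k), ?_⟩
    intro α S hS h hh A hA
    let B : Set (Multiset α) := {b | b.card = n + 1}
    have hrk : ¬ Rk (fun a b => S (a ::ₘ b)) (ht k) (A : Set α) B := by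
      intro hr
      obtain ⟨a, b, _, hb, hab⟩ := ladder k hr
      exact hS ⟨a, b, hb, fun i hi j hj => hab i hi.le j hj⟩
    obtain ⟨i, -, A0, hA0, hc, hgood⟩ :=
      find_good (fun i => h ^ ex D C i) (by simp [ex]) B (ht k) A hA hrk
    set s := h ^ ex D C i with hs
    have hs1 : 1 ≤ s := Nat.one_le_pow _ _ (by omega)
    have hhD : k * k < h ^ D := hD.trans_le (Nat.pow_le_pow_left hh D)
    have hc' : (h ^ D * s) ^ (C + 1) ≤ A0.card := by
      refine le_trans (le_of_eq ?_) hc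
      simp only [ex, hs]
      rw [← pow_add, ← pow_mul]
    have h'2 : 2 ≤ h ^ D * s := by
      have : h ^ 1 ≤ h ^ D := Nat.pow_le_pow_right (by omega) (by omega)
      nlinarith
    let S' : Multiset α → Prop := fun b => (A0.filter (fun a => ¬ S (a ::ₘ b))).card < s
    have hS'n : ∀ b : Multiset α, b.card = n + 1 → ¬ S' b →
        (A0.filter (fun a => S (a ::ₘ b))).card < s := by
      intro b hb hb'
      exact (hgood b hb).resolve_right hb'
    have hNL : NoLadder S' n k := by
      rintro ⟨a, b, hb, hab⟩
      let bad : Finset α := (Finset.range k ×ˢ Finset.range k).biUnion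
        (fun p => A0.filter (fun x => ¬ (S (x ::ₘ a p.1 ::ₘ b p.2) ↔ S' (a p.1 ::ₘ b p.2))))
      have hbc : bad.card ≤ k * k * s := by
        refine (Finset.card_biUnion_le_card_mul _ _ s ?_).trans (by simp)
        rintro ⟨i, j⟩ hp
        simp only [Finset.mem_product, Finset.mem_range] at hp
        by_cases hS' : S' (a i ::ₘ b j)
        · simp only [hS', iff_true]; exact hS'.le
        · simp only [hS', iff_false, not_not]
          exact (hS'n _ (by simp [hb j hp.2]) hS').le
      have hlt : bad.card < A0.card := by
        refine lt_of_le_of_lt hbc (lt_of_lt_of_le ?_ hc')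
        calc k * k * s < h ^ D * s := Nat.mul_lt_mul_of_pos_right hhD (by omega)
          _ ≤ (h ^ D * s) ^ (C+1) := Nat.le_self_pow (by omega) _
      obtain ⟨x, hx, hxb⟩ := Finset.exists_mem_notMem_of_card_lt_card hlt
      simp only [bad, Finset.mem_biUnion, Finset.mem_product, Finset.mem_range, Finset.mem_filter,
        not_exists, not_and, not_not, Prod.forall] at hxb
      refine hS ⟨a, fun j => x ::ₘ b j, fun j hj => by simp [hb j hj], fun i hi j hj => ?_⟩
      rw [Multiset.cons_swap, hxb i j ⟨hi, hj⟩ hx, hab i hi j hj]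
    obtain ⟨H', hH'A, hH'c, hH'⟩ := hC S' hNL (h ^ D * s) h'2 A0
      ((Nat.pow_le_pow_right (by omega) (by omega)).trans hc')
    have hbig : h + h ^ (n+1) * s < H'.card := by
      refine lt_of_lt_of_le ?_ hH'c
      have h1 : h ^ (n+3) ≤ h ^ D := Nat.pow_le_pow_right (by omega) hD'
      have h2 : h ^ (n+3) = h ^ (n+1) * h * h := by ring
      have h3 : h ≤ h ^ (n+1) := Nat.le_self_pow (by omega) _
      have h4 : h ^ (n+1) * h * h * s ≤ h ^ D * s := by rw [← h2]; gcongr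
      have h5 : 4 * (h ^ (n+1) * s) ≤ h ^ (n+1) * h * h * s := by
        have : 4 ≤ h * h := by nlinarith
        calc 4 * (h ^ (n+1) * s) ≤ (h * h) * (h ^ (n+1) * s) := by gcongr
          _ = _ := by ring
      have h6 : h ^ (n+1) ≤ h ^ (n+1) * s := Nat.le_mul_of_pos_right _ hs1
      omega
    rcases hH' with hH' | hH'
    · obtain ⟨H, hH, hHc, hHh⟩ := greedy S (n+1) s h H' (by
        intro u hu huc
        exact (Finset.card_le_card (Finset.filter_subset_filter _ hH'A)).trans
          (hH' u hu huc).le) hbig h le_rfl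
      exact ⟨H, hH.trans (hH'A.trans hA0), hHc.ge, Or.inl hHh⟩
    · obtain ⟨H, hH, hHc, hHh⟩ := greedy (fun t => ¬ S t) (n+1) s h H' (by
        intro u hu huc
        simp only [not_not]
        exact (Finset.card_le_card (Finset.filter_subset_filter _ hH'A)).trans
          (hS'n _ huc (hH' u hu huc)).le) hbig h le_rfl
      exact ⟨H, hH.trans (hH'A.trans hA0), hHc.ge, Or.inr hHh⟩


theorem map_eq {α : Type*} {n : ℕ} {x y : Fin n → α}
    (h : Finset.univ.val.map x = Finset.univ.val.map y) : ∃ σ : Equiv.Perm (Fin n), y ∘ σ = x := by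
  classical
  have e : ∀ c, Nonempty ({a // x a = c} ≃ {b // y b = c}) := by
    intro c
    have := congrArg (Multiset.count c) h
    rw [Multiset.count_map, Multiset.count_map] at this
    refine ⟨Fintype.equivOfCardEq ?_⟩
    rw [Fintype.card_subtype, Fintype.card_subtype]
    simpa [Finset.card_def, Finset.filter_val, eq_comm] using this
  refine ⟨Equiv.ofFiberEquiv (fun c => (e c).some), ?_⟩
  funext a
  exact Equiv.ofFiberEquiv_map _ a

theorem exists_map {α : Type*} {n : ℕ} {t : Multiset α} (h : t.card = n) :
    ∃ x : Fin n → α, Finset.univ.val.map x = t := by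
  induction t using Quotient.inductionOn with
  | h l =>
    subst h
    exact ⟨l.get, (Fin.univ_val_map _).trans (congrArg _ (List.ofFn_get l))⟩

theorem map_extend {α : Type*} {n : ℕ} (a : α) (b : Fin (n + 1 - 1) → α) :
    Finset.univ.val.map (extendTuple (n := n + 1) a b) = a ::ₘ Finset.univ.val.map b := by
  have : extendTuple (n := n + 1) a b = Fin.cons (α := fun _ => α) a b := by
    funext t
    refine Fin.cases ?_ (fun i => ?_) t
    · simp [extendTuple]
    · simp [extendTuple]
  rw [this, Fin.univ_val_map, Fin.univ_val_map, List.ofFn_cons]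
  rfl

/-- The predicate on multisets. -/
def toM {α : Type*} {n : ℕ} (E : Set (Fin n → α)) (t : Multiset α) : Prop :=
  ∃ x ∈ E, Finset.univ.val.map x = t

theorem toM_iff {α : Type*} {n : ℕ} {E : Set (Fin n → α)}
    (hsym : ∀ (σ : Equiv.Perm (Fin n)) (x : Fin n → α), x ∈ E → x ∘ σ ∈ E) (x : Fin n → α) :
    toM E (Finset.univ.val.map x) ↔ x ∈ E := by
  constructor
  · rintro ⟨y, hy, h⟩
    obtain ⟨σ, rfl⟩ := map_eq h.symm
    exact hsym σ y hy
  · intro h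
    exact ⟨x, h, rfl⟩

theorem exists_h (C M : ℕ) (hC : 0 < C) (hM : 2 ^ C ≤ M) : ∃ h ≥ 2, h ^ C ≤ M ∧ M ≤ h ^ (2 * C) := by
  · let h := Nat.findGreatest (fun h => h ^ C ≤ M) M
    have h1 : h ^ C ≤ M := by
      refine Nat.findGreatest_spec (P := fun h => h ^ C ≤ M) (m := 2) ?_ hM
      exact (Nat.le_self_pow (by omega) 2).trans hM
    have h2 : 2 ≤ h := Nat.le_findGreatest ((Nat.le_self_pow (by omega) 2).trans hM) hM
    refine ⟨h, h2, h1, ?_⟩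
    by_contra hcon
    push Not at hcon
    have h3 : (h + 1) ^ C ≤ M := by
      refine le_trans ?_ hcon.le
      rw [pow_mul]
      exact Nat.pow_le_pow_left (by nlinarith) C
    have : h + 1 ≤ h := Nat.le_findGreatest ((Nat.le_self_pow (by omega) _).trans h3) h3
    omega

end EH

/-- **Nonstandard Erdős–Hajnal for stable pseudo-finite hypergraphs.**
If the partitioned relation `E(x₁; x₂, …, xₙ)` is stable on the ultraproduct, then
there are nonempty subsets `A m ⊆ V m` with `δ(A) > 0` whose ultraproduct is
`E`-homogeneous. -/
theorem nonstandard_erdos_hajnal_hypergraphs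
    (𝓕 : Ultrafilter ℕ) (h𝓕 : ∀ s : Set ℕ, s.Finite → s ∉ 𝓕)
    (V : ℕ → Type) [∀ m, Fintype (V m)] [∀ m, Nonempty (V m)]
    (hV : Tendsto (fun m => Fintype.card (V m)) (𝓕 : Filter ℕ) atTop)
    (n : ℕ) (hn : 2 ≤ n)
    (E : ∀ m, Set (Fin n → V m))
    (hsym : ∀ m (σ : Equiv.Perm (Fin n)) (x : Fin n → V m), x ∈ E m → x ∘ σ ∈ E m)
    (hstable : ∃ k : ℕ, ¬ ∃ (a : Fin k → ∀ m, V m) (b : Fin k → Fin (n - 1) → ∀ m, V m),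
        ∀ i j, ({m | extendTuple (a i m) (fun t => b j t m) ∈ E m} ∈ 𝓕 ↔ i ≤ j)) :
    ∃ A : ∀ m, Set (V m),
      (∀ m, (A m).Nonempty) ∧
      (∃ l : ℝ, hasDim 𝓕 A l ∧ 0 < l) ∧
      ((∀ x : Fin n → ∀ m, V m, (∀ t, {m | x t m ∈ A m} ∈ 𝓕) →
          (∀ t t', t ≠ t' → {m | x t m ≠ x t' m} ∈ 𝓕) →
          {m | (fun t => x t m) ∈ E m} ∈ 𝓕) ∨
       (∀ x : Fin n → ∀ m, V m, (∀ t, {m | x t m ∈ A m} ∈ 𝓕) →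
          (∀ t t', t ≠ t' → {m | x t m ≠ x t' m} ∈ 𝓕) →
          {m | (fun t => x t m) ∈ E m} ∉ 𝓕)) := by
  obtain ⟨N, rfl⟩ : ∃ N, n = N + 1 := ⟨n - 1, by omega⟩
  obtain ⟨k, hk⟩ := hstable
  obtain ⟨C0, hC0⟩ := EH.finite_EH k N
  let C := C0 + 1
  have hNL : ∀ᶠ m in (𝓕 : Filter ℕ), EH.NoLadder (EH.toM (E m)) N k := by
    by_contra hcon
    have hcon : ∀ᶠ m in (𝓕 : Filter ℕ), ¬ EH.NoLadder (EH.toM (E m)) N k :=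
      Ultrafilter.eventually_not.2 hcon
    have key : ∀ m, ∃ (a : Fin k → V m) (b : Fin k → Fin N → V m),
        ¬ EH.NoLadder (EH.toM (E m)) N k →
          ∀ i j, (extendTuple (n := N + 1) (a i) (b j) ∈ E m ↔ i ≤ j) := by
      intro m
      by_cases h : EH.NoLadder (EH.toM (E m)) N k
      · exact ⟨fun _ => Classical.arbitrary _, fun _ _ => Classical.arbitrary _, fun h' => absurd h h'⟩
      · unfold EH.NoLadder at h
        rw [not_not] at h
        obtain ⟨a, b, hb, hab⟩ := h
        choose b' hb' using fun j : Fin k => EH.exists_map (hb j j.2)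
        refine ⟨fun i => a i, b', fun _ i j => ?_⟩
        rw [← EH.toM_iff (hsym m), EH.map_extend, Fin.le_def, ← hab i i.2 j j.2, ← hb' j]
    choose a b hab using key
    refine hk ⟨fun i m => a m i, fun j t m => b m j t, fun i j => ?_⟩
    have : ∀ᶠ m in (𝓕 : Filter ℕ),
        (extendTuple (n := N + 1) (a m i) (b m j) ∈ E m ↔ i ≤ j) :=
      hcon.mono fun m hm => hab m hm i j
    constructor
    · intro h
      obtain ⟨m, h1, h2⟩ := (this.and (show ∀ᶠ m in (𝓕 : Filter ℕ), _ from h)).exists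
      exact h1.1 h2
    · intro h
      exact this.mono fun m hm => hm.2 h
  have hbig : ∀ᶠ m in (𝓕 : Filter ℕ), 2 ^ C ≤ Fintype.card (V m) :=
    hV.eventually_ge_atTop _
  have key : ∀ m, ∃ H : Finset (V m), H.Nonempty ∧
      (EH.NoLadder (EH.toM (E m)) N k → 2 ^ C ≤ Fintype.card (V m) →
        Fintype.card (V m) ≤ H.card ^ (2 * C) ∧
        (EH.Hom (EH.toM (E m)) (N+1) H ∨ EH.Hom (fun t => ¬ EH.toM (E m) t) (N+1) H)) := by
    intro m
    by_cases h1 : EH.NoLadder (EH.toM (E m)) N k ∧ 2 ^ C ≤ Fintype.card (V m)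
    · obtain ⟨h, hh, hle, hge⟩ := EH.exists_h C _ (Nat.succ_pos _) h1.2
      obtain ⟨H, -, hc, hH⟩ := hC0 _ h1.1 h hh Finset.univ
        ((Nat.pow_le_pow_right (by omega) (Nat.le_succ _)).trans hle)
      exact ⟨H, Finset.card_pos.1 (by omega), fun _ _ =>
        ⟨hge.trans (Nat.pow_le_pow_left hc _), hH⟩⟩
    · exact ⟨Finset.univ, Finset.univ_nonempty, fun h2 h3 => absurd ⟨h2, h3⟩ h1⟩
  choose H hne hH using key
  have hgood : ∀ᶠ m in (𝓕 : Filter ℕ), Fintype.card (V m) ≤ (H m).card ^ (2 * C) ∧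
        (EH.Hom (EH.toM (E m)) (N+1) (H m) ∨ EH.Hom (fun t => ¬ EH.toM (E m) t) (N+1) (H m)) := by
    filter_upwards [hNL, hbig] with m h1 h2 using hH m h1 h2
  have hdist : ∀ x : Fin (N+1) → ∀ m, V m, (∀ t, {m | x t m ∈ (H m : Set (V m))} ∈ 𝓕) →
      (∀ t t', t ≠ t' → {m | x t m ≠ x t' m} ∈ 𝓕) →
      ∀ᶠ m in (𝓕 : Filter ℕ), ∃ u ⊆ H m, u.card = N + 1 ∧
        u.val = Finset.univ.val.map (fun t => x t m) := by
    classical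
    intro x hx hd
    have h1 : ∀ᶠ m in (𝓕 : Filter ℕ), ∀ t, x t m ∈ H m :=
      eventually_all.2 fun t => hx t
    have h2 : ∀ᶠ m in (𝓕 : Filter ℕ), ∀ t t', t ≠ t' → x t m ≠ x t' m := by
      refine eventually_all.2 fun t => eventually_all.2 fun t' => ?_
      by_cases htt : t = t'
      · simp [htt]
      · exact (show ∀ᶠ m in (𝓕 : Filter ℕ), _ from hd t t' htt).mono fun m hm _ => hm
    filter_upwards [h1, h2] with m h1 h2
    have hinj : Function.Injective (fun t => x t m) := fun t t' h => by
      by_contra hne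
      exact h2 t t' hne h
    refine ⟨Finset.univ.map ⟨fun t => x t m, hinj⟩, ?_, by simp, rfl⟩
    intro y hy
    obtain ⟨t, -, rfl⟩ := Finset.mem_map.1 hy
    exact h1 t
  refine ⟨fun m => (H m : Set (V m)), fun m => Finset.coe_nonempty.2 (hne m), ?_, ?_⟩
  · let f : ℕ → ℝ := fun m => Real.log (((H m : Set (V m))).ncard) / Real.log (Fintype.card (V m))
    have hf : ∀ m, f m ∈ Set.Icc (0:ℝ) 1 := by
      intro m
      have h1 : (1:ℝ) ≤ (H m).card := by exact_mod_cast Finset.card_pos.2 (hne m)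
      have h2 : ((H m).card : ℝ) ≤ Fintype.card (V m) := by exact_mod_cast Finset.card_le_univ _
      have h3 : 0 ≤ Real.log (H m).card := Real.log_nonneg h1
      have h4 := Real.log_le_log (by linarith) h2
      simp only [f, Set.ncard_coe_finset]
      exact ⟨div_nonneg h3 (h3.trans h4), div_le_one_of_le₀ h4 (h3.trans h4)⟩
    obtain ⟨l, -, hl⟩ := isCompact_Icc.ultrafilter_le_nhds (𝓕.map f) (by
      rw [le_principal_iff]
      exact Filter.mem_map.2 (Filter.mem_of_superset Filter.univ_mem fun m _ => hf m))
    have hl : Tendsto f 𝓕 (nhds l) := hl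
    refine ⟨l, hl, ?_⟩
    have hCpos : (0:ℝ) < 2 * C := by positivity
    refine lt_of_lt_of_le (inv_pos.2 hCpos) (ge_of_tendsto hl ?_)
    filter_upwards [hgood, hbig] with m hm hm2
    have hV2 : (1:ℝ) < Fintype.card (V m) := by
      have : 1 < 2 ^ C := Nat.one_lt_two_pow (Nat.succ_ne_zero _)
      exact_mod_cast this.trans_le hm2
    have h1 : Real.log (Fintype.card (V m)) ≤ (2 * C) * Real.log (H m).card := by
      have : (Fintype.card (V m) : ℝ) ≤ ((H m).card : ℝ) ^ (2 * C) := by exact_mod_cast hm.1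
      have := Real.log_le_log (by linarith) this
      rw [Real.log_pow] at this
      exact_mod_cast this
    simp only [f, Set.ncard_coe_finset]
    rw [inv_eq_one_div, div_le_div_iff₀ hCpos (Real.log_pos hV2)]
    linarith
  · have := hgood.mono fun m hm => hm.2
    rcases Ultrafilter.eventually_or.1 this with h | h
    · left
      intro x hx hd
      filter_upwards [h, hdist x hx hd] with m hm ⟨u, hu, huc, huv⟩
      have := hm u hu huc
      rwa [huv, EH.toM_iff (hsym m)] at this
    · right
      intro x hx hd
      refine Ultrafilter.compl_mem_iff_notMem.1 ?_
      filter_upwards [h, hdist x hx hd] with m hm ⟨u, hu, huc, huv⟩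
      have := hm u hu huc
      rwa [huv, EH.toM_iff (hsym m)] at this
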